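/- Let n ≥ 1 and N ≥ 1 be integers and let F be a real-valued function on n×n real matrices given by evaluating a homogeneous polynomial of degree N in the matrix entries, such that: (i) F(g A gᵗ) = F(A) for every orthogonal n×n matrix g and every real symmetric A; (ii) for every real symmetric n×n matrix A there exists a real univariate polynomial of degree N, equal to the function t ↦ F(tI + A), all N of whose roots (counted with multiplicity) are real; (iii) F(A) > 0 for every real symmetric positive definite n×n matrix A. Then F(I) > 0 and for every real symmetric positive semidefinite n×n matrix A one has F(A)^{1/N} ≥ F(I)^{1/N} · (det A)^{1/n}. -/

import Mathlib

/-!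
By the spectral theorem and orthogonal invariance everything reduces to `p l = F (diag l)`, a symmetric
homogeneous polynomial of degree `N` in the eigenvalues, positive on the open positive orthant and
hyperbolic in the direction `𝟙 = (1, …, 1)`.

The main point is that `p` has nonnegative coefficients (`coeff_nonneg`). A version of Gårding's
homotopy argument (`no_zero_upper`, `stable_of_hyperbolic`) shows that `p` is stable: it has no zeros
with all imaginary parts positive. Stability together with positivity on the orthant is inherited by
the derivative of `p` in any strictly positive direction (`dirDeriv_stable`, `dirDeriv_pos`), because the
logarithmic derivative is a sum over roots lying in the lower half-plane, respectively on the negative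
axis. Induction on the degree then gives the sign of the coefficients.

With nonnegative coefficients, `p (exp x)` is a positive combination of exponentials of linear forms,
and the tangent line inequality for `exp`, with the symmetry of `p`, gives
`p l ≥ p 𝟙 (∏ lᵢ) ^ (N / n)` (`symmetric_majorization`).
-/

namespace GardingDirichlet

open MvPolynomial

variable {ι : Type*}

/-! ### Polynomials restricted to complex lines -/

/-- The restriction `s ↦ p (z + s a)` of `p` to a complex line, as a univariate polynomial. -/
noncomputable def line (p : MvPolynomial ι ℝ) (z a : ι → ℂ) : Polynomial ℂ :=
  aeval (fun i => Polynomial.C (a i) * Polynomial.X + Polynomial.C (z i)) p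

lemma line_eval (p : MvPolynomial ι ℝ) (z a : ι → ℂ) (s : ℂ) :
    (line p z a).eval s = aeval (fun i => z i + s * a i) p := by
  induction p using MvPolynomial.induction_on with
  | C r => simp [line, Polynomial.algebraMap_apply]
  | add p q hp hq => simp only [line, map_add, Polynomial.eval_add] at *; rw [hp, hq]
  | mul_X p i hp =>
    simp only [line, map_mul, Polynomial.eval_mul, aeval_X] at *
    rw [hp]
    simp only [Polynomial.eval_add, Polynomial.eval_mul, Polynomial.eval_C, Polynomial.eval_X]
    rw [add_comm (a i * s), mul_comm (a i)]

lemma aeval_ofReal (p : MvPolynomial ι ℝ) (x : ι → ℝ) :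
    aeval (fun i => (x i : ℂ)) p = ((eval x p : ℝ) : ℂ) := by
  have := aeval_algebraMap_apply (R := ℝ) (A := ℝ) ℂ x p
  simpa [Function.comp_def] using this

lemma eval_aeval_comp {κ : Type*} (f : κ → MvPolynomial ι ℝ) (l : ι → ℝ)
    (Φ : MvPolynomial κ ℝ) : eval l (aeval f Φ) = eval (fun k => eval l (f k)) Φ := by
  induction Φ using MvPolynomial.induction_on with
  | C r => simp
  | add p q hp hq => simp only [map_add, hp, hq]
  | mul_X p i hp => simp only [map_mul, hp, aeval_X, eval_X]

lemma pderiv_eval_one (p : MvPolynomial ι ℝ) (i : ι) :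
    eval (fun _ => 1) (pderiv i p) = ∑ d ∈ p.support, coeff d p * d i := by
  conv_lhs => rw [p.as_sum, map_sum, map_sum]
  refine Finset.sum_congr rfl fun d _ => ?_
  rw [pderiv_monomial, eval_monomial]
  simp

variable [Fintype ι]

lemma aeval_sum_monomials (p : MvPolynomial ι ℝ) {S : Type*} [CommSemiring S] [Algebra ℝ S]
    (z : ι → S) :
    aeval z p = ∑ d ∈ p.support, algebraMap ℝ S (coeff d p) * ∏ i, z i ^ d i := by
  rw [aeval_def, eval₂_eq']

lemma sum_exponents {p : MvPolynomial ι ℝ} {N : ℕ} (hp : p.IsHomogeneous N) {d : ι →₀ ℕ}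
    (hd : d ∈ p.support) : ∑ i, d i = N := by
  rw [← Finsupp.degree_eq_sum]
  by_contra h
  exact (mem_support_iff.mp hd) (hp.coeff_eq_zero h)

lemma aeval_scale {p : MvPolynomial ι ℝ} {N : ℕ} (hp : p.IsHomogeneous N) (c : ℂ) (z : ι → ℂ) :
    aeval (fun i => c * z i) p = c ^ N * aeval z p := by
  simp only [aeval_sum_monomials, Finset.mul_sum]
  refine Finset.sum_congr rfl fun d hd => ?_
  simp only [mul_pow, Finset.prod_mul_distrib, Finset.prod_pow_eq_pow_sum]
  rw [sum_exponents hp hd]; ring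

lemma continuous_aeval (p : MvPolynomial ι ℝ) :
    Continuous fun z : ι → ℂ => aeval z p := by
  simp only [aeval_sum_monomials]
  fun_prop

/-- For `p` homogeneous of degree `N`, the polynomial `s ↦ p (z + s a)` has degree `N` and leading
coefficient `p a`, provided `p a ≠ 0`. All `a i` are taken nonzero so that each monomial already
restricts to a polynomial of degree exactly `N`. -/
lemma line_natDegree {p : MvPolynomial ι ℝ} {N : ℕ} (hp : p.IsHomogeneous N) (z a : ι → ℂ)
    (ha : ∀ i, a i ≠ 0) (hpa : aeval a p ≠ 0) :
    (line p z a).natDegree = N ∧ (line p z a).leadingCoeff = aeval a p := by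
  have hlin : ∀ i, (Polynomial.C (a i) * Polynomial.X + Polynomial.C (z i)).natDegree = 1 :=
    fun i => Polynomial.natDegree_linear (ha i)
  have hlead : ∀ i, (Polynomial.C (a i) * Polynomial.X + Polynomial.C (z i)).leadingCoeff = a i :=
    fun i => Polynomial.leadingCoeff_linear (ha i)
  have hne : ∀ i, Polynomial.C (a i) * Polynomial.X + Polynomial.C (z i) ≠ 0 := fun i h => by
    have := hlin i; rw [h] at this; simp at this
  have hmon : ∀ d ∈ p.support,
      (∏ i, (Polynomial.C (a i) * Polynomial.X + Polynomial.C (z i)) ^ d i).natDegree = N := by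
    intro d hd
    rw [Polynomial.natDegree_prod _ _ fun i _ => pow_ne_zero _ (hne i)]
    simp only [Polynomial.natDegree_pow, hlin, mul_one]
    exact sum_exponents hp hd
  have hle : (line p z a).natDegree ≤ N := by
    rw [line, aeval_sum_monomials]
    refine Polynomial.natDegree_sum_le_of_forall_le _ _ fun d hd => ?_
    rw [Polynomial.algebraMap_apply]
    exact (Polynomial.natDegree_C_mul_le _ _).trans (hmon d hd).le
  have hco : (line p z a).coeff N = aeval a p := by
    rw [line, aeval_sum_monomials, aeval_sum_monomials, Polynomial.finsetSum_coeff]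
    refine Finset.sum_congr rfl fun d hd => ?_
    rw [Polynomial.algebraMap_apply, Polynomial.coeff_C_mul]
    congr 1
    conv_lhs => rw [← hmon d hd]
    rw [Polynomial.coeff_natDegree, Polynomial.leadingCoeff_prod]
    simp only [Polynomial.leadingCoeff_pow, hlead]
  have hdeg : (line p z a).natDegree = N :=
    le_antisymm hle (Polynomial.le_natDegree_of_ne_zero (hco ▸ hpa))
  exact ⟨hdeg, by rw [Polynomial.leadingCoeff, hdeg, hco]⟩

/-! ### Stability and nonnegative coefficients -/

/-- The directional derivative `∑ i, v i ∂p/∂xᵢ`. -/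
noncomputable def dirDeriv (v : ι → ℝ) (p : MvPolynomial ι ℝ) : MvPolynomial ι ℝ :=
  ∑ i, C (v i) * pderiv i p

lemma derivative_line (p : MvPolynomial ι ℝ) (z : ι → ℂ) (v : ι → ℝ) :
    (line p z (fun i => (v i : ℂ))).derivative = line (dirDeriv v p) z (fun i => (v i : ℂ)) := by
  classical
  induction p using MvPolynomial.induction_on with
  | C r => simp [line, dirDeriv, Polynomial.algebraMap_apply]
  | add p q hp hq =>
    simp only [line, dirDeriv, map_add, mul_add, Finset.sum_add_distrib] at *
    rw [hp, hq]
  | mul_X p j hp =>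
    have h : dirDeriv v (p * X j) = dirDeriv v p * X j + p * C (v j) := by
      simp only [dirDeriv, pderiv_mul, pderiv_X, mul_add, Finset.sum_add_distrib, Finset.sum_mul]
      congr 1
      · simp [mul_assoc]
      · rw [Finset.sum_eq_single j]
        · simp [mul_comm]
        · intro b _ hb; simp [hb.symm]
        · simp
    rw [h]
    simp only [line, map_mul, map_add, aeval_X, Polynomial.derivative_mul] at *
    rw [hp]
    simp [Polynomial.algebraMap_apply]

lemma dirDeriv_isHomogeneous {p : MvPolynomial ι ℝ} {N : ℕ} (hp : p.IsHomogeneous (N + 1))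
    (v : ι → ℝ) : (dirDeriv v p).IsHomogeneous N :=
  IsHomogeneous.sum _ _ _ fun i _ => by simpa using (hp.pderiv (i := i)).C_mul (v i)

/-- `p` has no zeros in the product of open upper half-planes. -/
def Stable (p : MvPolynomial ι ℝ) : Prop :=
  ∀ z : ι → ℂ, (∀ i, 0 < (z i).im) → aeval z p ≠ 0

/-- `p` is positive on the open positive orthant. -/
def PosOrthant (p : MvPolynomial ι ℝ) : Prop :=
  ∀ a : ι → ℝ, (∀ i, 0 < a i) → 0 < eval a p

/-- The logarithmic derivative of `p` at `z` in direction `v`, as a sum over the roots `r` of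
`s ↦ p (z + s v)`. -/
lemma line_logDeriv (p : MvPolynomial ι ℝ) (z : ι → ℂ) (v : ι → ℝ) (h : aeval z p ≠ 0) :
    aeval z (dirDeriv v p) / aeval z p =
      ((line p z (fun i => (v i : ℂ))).roots.map fun r => 1 / (0 - r)).sum := by
  have h0 : ∀ q : MvPolynomial ι ℝ, (line q z (fun i => (v i : ℂ))).eval 0 = aeval z q := by
    intro q; simp [line_eval]
  have := (IsAlgClosed.splits (line p z (fun i => (v i : ℂ)))).eval_derivative_div_eval_of_ne_zero
    (x := 0) (by rwa [h0])
  rwa [derivative_line, h0, h0] at this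

lemma sum_map_pos {α : Type*} (s : Multiset α) (f : α → ℝ) (hs : s ≠ 0)
    (h : ∀ r ∈ s, 0 < f r) : 0 < (s.map f).sum := by
  obtain ⟨a, ha⟩ := Multiset.exists_mem_of_ne_zero hs
  obtain ⟨t, rfl⟩ := Multiset.exists_cons_of_mem ha
  rw [Multiset.map_cons, Multiset.sum_cons]
  refine add_pos_of_pos_of_nonneg (h a (by simp)) (Multiset.sum_nonneg fun x hx => ?_)
  obtain ⟨r, hr, rfl⟩ := Multiset.mem_map.mp hx
  exact (h r (by simp [hr])).le

lemma line_roots_ne_zero {p : MvPolynomial ι ℝ} {N : ℕ} (hp : p.IsHomogeneous (N + 1))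
    (hpos : PosOrthant p) {v : ι → ℝ} (hv : ∀ i, 0 < v i) (z : ι → ℂ) :
    (line p z (fun i => (v i : ℂ))).roots ≠ 0 := by
  have hd := (line_natDegree hp z (fun i => (v i : ℂ)) (fun i => by exact_mod_cast (hv i).ne')
    (by rw [aeval_ofReal]; exact_mod_cast (hpos v hv).ne')).1
  intro h
  have := (IsAlgClosed.splits (line p z (fun i => (v i : ℂ)))).natDegree_eq_card_roots
  rw [h, hd] at this
  simp at this

/-- At a point `z` of the product of upper half-planes, every root `r` of `s ↦ p (z + s v)` has
`Im r < 0`, so the logarithmic derivative `∑ 1 / (0 - r)` has negative imaginary part. -/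
lemma dirDeriv_stable {p : MvPolynomial ι ℝ} {N : ℕ} (hp : p.IsHomogeneous (N + 1))
    (hs : Stable p) (hpos : PosOrthant p) {v : ι → ℝ} (hv : ∀ i, 0 < v i) :
    Stable (dirDeriv v p) := by
  intro z hz h0
  have h := line_logDeriv p z v (hs z hz)
  rw [h0, zero_div] at h
  have him := congrArg (fun w => -Complex.imCLM w) h
  simp only [map_multiset_sum, Multiset.map_map] at him
  rw [← Multiset.sum_map_neg'] at him
  refine (sum_map_pos _ _ (line_roots_ne_zero hp hpos hv z) ?_).ne (by simpa using him)
  intro r hr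
  have hroot := (Polynomial.mem_roots'.mp hr).2
  rw [Polynomial.IsRoot, line_eval] at hroot
  have hr : r.im < 0 := by
    by_contra hcon
    push Not at hcon
    refine hs _ (fun i => ?_) hroot
    have := mul_nonneg hcon (hv i).le
    simp
    linarith [hz i]
  have hn : 0 < Complex.normSq r := Complex.normSq_pos.mpr (by rintro rfl; simp at hr)
  simp
  exact div_pos (neg_pos.mpr hr) hn

/-- At a point `a` of the positive orthant, every root `r` of `s ↦ p (a + s v)` is real and negative,
so the logarithmic derivative `∑ 1 / (0 - r)` is positive. -/
lemma dirDeriv_pos {p : MvPolynomial ι ℝ} {N : ℕ} (hp : p.IsHomogeneous (N + 1))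
    (hs : Stable p) (hpos : PosOrthant p) {v : ι → ℝ} (hv : ∀ i, 0 < v i) :
    PosOrthant (dirDeriv v p) := by
  intro a ha
  have hpa := hpos a ha
  have h := line_logDeriv p (fun i => (a i : ℂ)) v
    (by rw [aeval_ofReal]; exact_mod_cast hpa.ne')
  rw [aeval_ofReal, aeval_ofReal] at h
  have hre := congrArg Complex.reCLM h
  simp only [map_multiset_sum, Multiset.map_map] at hre
  have hq : 0 < eval a (dirDeriv v p) / eval a p := by
    have : Complex.reCLM (((eval a (dirDeriv v p) : ℝ) : ℂ) / ((eval a p : ℝ) : ℂ)) =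
        eval a (dirDeriv v p) / eval a p := by
      rw [← Complex.ofReal_div]; simp
    rw [← this, hre]
    refine sum_map_pos _ _ (line_roots_ne_zero hp hpos hv _) ?_
    intro r hr
    have hroot := (Polynomial.mem_roots'.mp hr).2
    rw [Polynomial.IsRoot, line_eval] at hroot
    have him : r.im = 0 := by
      rcases lt_trichotomy r.im 0 with hlt | heq | hgt
      -- by homogeneity `-(a + r v)` is a zero as well, with positive imaginary parts
      · exfalso
        refine hs (fun i => (-1) * ((a i : ℂ) + r * v i)) (fun i => ?_) ?_
        · have := mul_pos (neg_pos.mpr hlt) (hv i)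
          simp
          linarith
        · rw [aeval_scale hp, hroot, mul_zero]
      · exact heq
      · exfalso
        refine hs _ (fun i => ?_) hroot
        simpa using mul_pos hgt (hv i)
    have hr' : r = (r.re : ℂ) := by apply Complex.ext <;> simp [him]
    have hneg : r.re < 0 := by
      by_contra hcon
      push Not at hcon
      have := hpos (fun i => a i + r.re * v i) fun i =>
        add_pos_of_pos_of_nonneg (ha i) (mul_nonneg hcon (hv i).le)
      have h2 := aeval_ofReal p (fun i => a i + r.re * v i)
      push_cast at h2
      rw [← hr', hroot] at h2
      exact this.ne (by exact_mod_cast h2)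
    have hn : 0 < Complex.normSq r := Complex.normSq_pos.mpr (by rintro rfl; simp at hneg)
    simp [Complex.inv_re]
    exact div_neg_of_neg_of_pos hneg hn
  exact (div_pos_iff_of_pos_right hpa).mp hq

lemma nonneg_of_perturb (A B : ℝ) (h : ∀ ε : ℝ, 0 < ε → 0 ≤ A + ε * B) : 0 ≤ A := by
  by_contra hA
  push Not at hA
  have h1 := h (-A / (2 * (|B| + 1))) (by have := abs_nonneg B; apply div_pos <;> linarith)
  have hb : -A / (2 * (|B| + 1)) * B ≤ -A / 2 := by
    have := le_abs_self B
    have h3 := abs_nonneg B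
    rw [div_mul_eq_mul_div, div_le_div_iff₀ (by linarith) (by norm_num)]
    nlinarith
  linarith

/-- A stable homogeneous polynomial, positive on the orthant, has nonnegative coefficients: by
induction on the degree this holds for `dirDeriv v p` with `v` in the open orthant, and letting `v`
tend to a basis vector isolates a single coefficient of `p`. -/
theorem coeff_nonneg (N : ℕ) (p : MvPolynomial ι ℝ) (hp : p.IsHomogeneous N) (hs : Stable p)
    (hpos : PosOrthant p) (m : ι →₀ ℕ) : 0 ≤ coeff m p := by
  classical
  induction N generalizing p m with
  | zero =>
    rw [totalDegree_eq_zero_iff_eq_C.mp (Nat.le_zero.mp hp.totalDegree_le)] at hpos ⊢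
    have := hpos (fun _ => 1) (fun _ => one_pos)
    simp only [eval_C] at this
    rw [coeff_C]
    split_ifs <;> simp [this.le]
  | succ N ih =>
    by_cases hm : m.degree = N + 1
    · have hm0 : m ≠ 0 := by rintro rfl; simp at hm
      obtain ⟨i, hi⟩ := Finsupp.ne_iff.mp hm0
      obtain ⟨m', rfl⟩ : ∃ m', m = m' + Finsupp.single i 1 :=
        ⟨m - Finsupp.single i 1, (tsub_add_cancel_of_le (by
          rw [Finsupp.single_le_iff]; simp at hi; omega)).symm⟩
      have key : ∀ v : ι → ℝ, (∀ j, 0 < v j) →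
          0 ≤ ∑ j, v j * (coeff (m' + Finsupp.single j 1) p * (m' j + 1)) := by
        intro v hv
        have := ih (dirDeriv v p) (dirDeriv_isHomogeneous hp v) (dirDeriv_stable hp hs hpos hv)
          (dirDeriv_pos hp hs hpos hv) m'
        simpa [dirDeriv, coeff_sum, coeff_C_mul, coeff_pderiv] using this
      have h0 : 0 ≤ coeff (m' + Finsupp.single i 1) p * (m' i + 1) := by
        refine nonneg_of_perturb _
          (∑ j, coeff (m' + Finsupp.single j 1) p * (m' j + 1)) fun ε hε => ?_
        have := key (fun j => (if j = i then 1 else 0) + ε) fun j => by split_ifs <;> linarith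
        simpa [add_mul, Finset.sum_add_distrib, Finset.mul_sum] using this
      exact nonneg_of_mul_nonneg_left h0 (by positivity)
    · rw [hp.coeff_eq_zero hm]


/-! ### From hyperbolicity to stability -/

/-- If all roots lie in the open lower half-plane, each factor `s - r` has modulus at least `Im s`. -/
lemma norm_eval_lower_bound (P : Polynomial ℂ) (hroots : ∀ r ∈ P.roots, r.im < 0) (s : ℂ)
    (hs : 0 ≤ s.im) : ‖P.leadingCoeff‖ * s.im ^ P.natDegree ≤ ‖P.eval s‖ := by
  have hsp := IsAlgClosed.splits P
  rw [hsp.eval_eq_prod_roots, norm_mul, hsp.natDegree_eq_card_roots]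
  gcongr
  generalize P.roots = R at hroots
  induction R using Multiset.induction_on with
  | empty => simp
  | cons r R ih =>
    simp only [Multiset.card_cons, Multiset.map_cons, Multiset.prod_cons, norm_mul]
    rw [pow_succ, mul_comm]
    refine mul_le_mul ?_ (ih fun t ht => hroots t (Multiset.mem_cons_of_mem ht)) (by positivity)
      (norm_nonneg _)
    have h1 := hroots r (Multiset.mem_cons_self r R)
    have h2 := (le_abs_self _).trans (Complex.abs_im_le_norm (s - r))
    rw [Complex.sub_im] at h2
    linarith

/-- The core of Gårding's argument. In the homotopy `s ↦ p (θ x + i𝟙 + s a)`, `θ ∈ [0, 1]`, no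
polynomial has a real root, and at `θ = 0` all roots lie in the lower half-plane. The pairs `(θ, s)`
with `s` a root and `0 ≤ Im s` form a compact set; if it were nonempty, take a pair with the smallest
`θ`. The bound of `norm_eval_lower_bound` holds for all smaller `θ`, hence in the limit, contradicting
the vanishing at that pair. -/
lemma no_zero_upper {p : MvPolynomial ι ℝ} {N : ℕ} (hp : p.IsHomogeneous N)
    (hreal : ∀ (x : ι → ℝ) (t : ℂ), aeval (fun i => (x i : ℂ) + t) p = 0 → t.im = 0)
    (hpos : PosOrthant p) {a : ι → ℝ} (ha : ∀ i, 0 < a i) (x : ι → ℝ) (s : ℂ) (hs : 0 ≤ s.im) :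
    aeval (fun i => (x i : ℂ) + Complex.I + s * a i) p ≠ 0 := by
  set G : ℝ → ℂ → ℂ := fun θ s => aeval (fun i => (θ : ℂ) * x i + Complex.I + s * a i) p with hG
  have hpa : aeval (fun i => (a i : ℂ)) p ≠ 0 := by
    rw [aeval_ofReal]; exact_mod_cast (hpos a ha).ne'
  have hGcont : Continuous fun q : ℝ × ℂ => G q.1 q.2 :=
    (continuous_aeval p).comp (by fun_prop)
  have hscale : ∀ θ s, s ≠ 0 →
      G θ s = s ^ N * aeval (fun i => (a i : ℂ) + s⁻¹ * ((θ : ℂ) * x i + Complex.I)) p := by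
    intro θ s hs0
    rw [← aeval_scale hp]
    simp only [hG]
    congr 2
    funext i
    field_simp
    ring
  have hnoreal : ∀ θ s, G θ s = 0 → s.im ≠ 0 := by
    intro θ s h0 him
    have hs' : s = (s.re : ℂ) := by apply Complex.ext <;> simp [him]
    have := hreal (fun i => θ * x i + s.re * a i) Complex.I (by
      rw [← h0]
      simp only [hG]
      congr 2
      funext i
      conv_rhs => rw [hs']
      push_cast
      ring)
    simp at this
  -- at `θ = 0` homogeneity turns a root `s` into the root `i / s` of `t ↦ p (a + t𝟙)`, which is
  -- real by hyperbolicity and negative by positivity on the orthant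
  have hzero : ∀ s : ℂ, 0 ≤ s.im → G 0 s ≠ 0 := by
    intro s hs h0
    have hs0 : s ≠ 0 := by
      rintro rfl
      exact hnoreal 0 0 h0 (by simp)
    rw [hscale 0 s hs0] at h0
    have h1 := (mul_eq_zero.mp h0).resolve_left (pow_ne_zero _ hs0)
    simp only [Complex.ofReal_zero, zero_mul, zero_add] at h1
    have him := hreal a _ h1
    set t := s⁻¹ * Complex.I with ht
    have ht' : t = (t.re : ℂ) := by apply Complex.ext <;> simp [him]
    have hre : 0 ≤ t.re := by
      have : t.re = s.im / Complex.normSq s := by simp [ht, Complex.inv_im]; ring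
      rw [this]
      exact div_nonneg hs (Complex.normSq_nonneg _)
    have h2 := hpos (fun i => a i + t.re) fun i => add_pos_of_pos_of_nonneg (ha i) hre
    have h3 := aeval_ofReal p (fun i => a i + t.re)
    push_cast at h3
    rw [← ht', h1] at h3
    exact h2.ne (by exact_mod_cast h3)
  -- `p` does not vanish near `a`, and `G θ s = s ^ N p (a + s⁻¹ (θ x + i𝟙))`: the roots stay bounded
  obtain ⟨R, hR⟩ : ∃ R : ℝ, ∀ θ ∈ Set.Icc (0 : ℝ) 1, ∀ s, G θ s = 0 → ‖s‖ ≤ R := by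
    obtain ⟨ε, hε, hball⟩ := Metric.eventually_nhds_iff.mp
      ((continuous_aeval p).continuousAt.eventually_ne hpa)
    refine ⟨(‖x‖ + 1) / ε, fun θ hθ s h0 => ?_⟩
    have hM : 0 ≤ ‖x‖ + 1 := by positivity
    by_cases hs0 : s = 0
    · rw [hs0, norm_zero]; positivity
    rw [hscale θ s hs0] at h0
    have h1 := (mul_eq_zero.mp h0).resolve_left (pow_ne_zero _ hs0)
    have h2 : ε ≤ ‖s‖⁻¹ * (‖x‖ + 1) := by
      by_contra hcon
      push Not at hcon
      refine hball (lt_of_le_of_lt ((dist_pi_le_iff (by positivity)).mpr fun i => ?_) hcon) h1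
      rw [dist_eq_norm, add_sub_cancel_left, norm_mul, norm_inv]
      gcongr
      refine (norm_add_le _ _).trans ?_
      rw [Complex.norm_I, norm_mul, Complex.norm_real, Complex.norm_real]
      gcongr
      have hx := norm_le_pi_norm x i
      have hθ' : ‖θ‖ ≤ 1 := by rw [Real.norm_of_nonneg hθ.1]; exact hθ.2
      nlinarith [norm_nonneg (x i), norm_nonneg θ]
    have hsn : 0 < ‖s‖ := norm_pos_iff.mpr hs0
    rw [le_div_iff₀ hε]
    rw [inv_mul_eq_div, le_div_iff₀ hsn] at h2
    linarith
  intro hbad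
  set B : Set (ℝ × ℂ) := {q | q.1 ∈ Set.Icc (0 : ℝ) 1 ∧ 0 ≤ q.2.im ∧ G q.1 q.2 = 0} with hB
  have hBclosed : IsClosed B := by
    refine (isClosed_Icc.preimage continuous_fst).inter (IsClosed.inter ?_ ?_)
    · exact isClosed_le continuous_const (Complex.continuous_im.comp continuous_snd)
    · exact isClosed_eq hGcont continuous_const
  have hBcomp : IsCompact B :=
    (isCompact_Icc.prod (isCompact_closedBall (0 : ℂ) R)).of_isClosed_subset hBclosed
      fun q hq => ⟨hq.1, by simpa using hR q.1 hq.1 q.2 hq.2.2⟩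
  obtain ⟨⟨θ₀, s₀⟩, hq, hmin⟩ := hBcomp.exists_isMinOn
    ⟨(1, s), ⟨by simp, hs, by simpa [hG] using hbad⟩⟩ continuous_fst.continuousOn
  obtain ⟨hθ₀, hs₀, hGq⟩ := hq
  simp only at hθ₀ hs₀ hGq
  have hθpos : θ₀ ≠ 0 := by
    rintro rfl
    exact hzero s₀ hs₀ hGq
  have hs₀pos : 0 < s₀.im := lt_of_le_of_ne hs₀ (hnoreal θ₀ s₀ hGq).symm
  have hlow : ∀ θ ∈ Set.Ico 0 θ₀,
      ‖aeval (fun i => (a i : ℂ)) p‖ * s₀.im ^ N ≤ ‖G θ s₀‖ := by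
    intro θ hθ
    obtain ⟨hd, hl⟩ := line_natDegree hp (fun i => (θ : ℂ) * x i + Complex.I)
      (fun i => (a i : ℂ)) (fun i => by exact_mod_cast (ha i).ne') hpa
    have := norm_eval_lower_bound (line p (fun i => (θ : ℂ) * x i + Complex.I)
      (fun i => (a i : ℂ))) (fun r hr => ?_) s₀ hs₀
    · rwa [hd, hl, line_eval] at this
    · have hroot := (Polynomial.mem_roots'.mp hr).2
      rw [Polynomial.IsRoot, line_eval] at hroot
      by_contra hcon
      push Not at hcon
      have : θ₀ ≤ θ := hmin (show (θ, r) ∈ B from ⟨⟨hθ.1, hθ.2.le.trans hθ₀.2⟩, hcon, hroot⟩)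
      exact absurd hθ.2 (not_lt.mpr this)
  have hclosed : IsClosed {θ : ℝ | ‖aeval (fun i => (a i : ℂ)) p‖ * s₀.im ^ N ≤ ‖G θ s₀‖} :=
    isClosed_le continuous_const
      (hGcont.comp (continuous_id.prodMk continuous_const)).norm
  have hcl := closure_minimal hlow hclosed
  rw [closure_Ico hθpos.symm] at hcl
  have hfin := hcl (Set.right_mem_Icc.mpr hθ₀.1)
  change _ ≤ ‖G θ₀ s₀‖ at hfin
  rw [hGq, norm_zero] at hfin
  have : 0 < ‖aeval (fun i => (a i : ℂ)) p‖ * s₀.im ^ N :=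
    mul_pos (norm_pos_iff.mpr hpa) (pow_pos hs₀pos N)
  linarith

/-- A homogeneous polynomial which is hyperbolic in the direction `𝟙 = (1, …, 1)` and positive on the
open positive orthant is stable. -/
theorem stable_of_hyperbolic {p : MvPolynomial ι ℝ} {N : ℕ} (hp : p.IsHomogeneous N)
    (hreal : ∀ (x : ι → ℝ) (t : ℂ), aeval (fun i => (x i : ℂ) + t) p = 0 → t.im = 0)
    (hpos : PosOrthant p) : Stable p := by
  intro z hz h0
  obtain ⟨ε, hε, hεz⟩ : ∃ ε : ℝ, 0 < ε ∧ ∀ i, ε < (z i).im := by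
    have h := (Filter.eventually_all (l := nhdsWithin (0 : ℝ) (Set.Ioi 0))).mpr fun i : ι =>
      (eventually_lt_nhds (hz i)).filter_mono nhdsWithin_le_nhds
    obtain ⟨ε, h1, h2⟩ := (h.and self_mem_nhdsWithin).exists
    exact ⟨ε, h2, h1⟩
  have hεc : (ε : ℂ) ≠ 0 := by exact_mod_cast (ne_of_gt hε)
  -- `ε⁻¹ z = ε⁻¹ Re z + i𝟙 + (i / ε) (Im z - ε𝟙)`
  refine no_zero_upper hp hreal hpos (a := fun i => (z i).im - ε) (fun i => sub_pos.mpr (hεz i))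
    (fun i => (z i).re / ε) (Complex.I / ε) (by simp; positivity) ?_
  have : (fun i => (((z i).re / ε : ℝ) : ℂ) + Complex.I +
      Complex.I / ε * (((z i).im - ε : ℝ) : ℂ)) = fun i => (ε : ℂ)⁻¹ * z i := by
    funext i
    conv_rhs => rw [← Complex.re_add_im (z i)]
    push_cast
    field_simp
    ring
  rw [this, aeval_scale hp, h0, mul_zero]

/-! ### The inequality on the positive orthant -/

/-- Put `l = exp x`. A polynomial with nonnegative coefficients is a nonnegative combination of
exponentials of linear forms `⟨d, x⟩`; bounding each from below by its tangent at
`μ = (N / n) ∑ i, x i`, the first-order terms cancel because the partial derivatives of `p` at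
`(1, …, 1)` all equal `(N / n) p (1, …, 1)`, by symmetry and Euler's identity. -/
theorem symmetric_majorization [Nonempty ι] {p : MvPolynomial ι ℝ} {N : ℕ}
    (hp : p.IsHomogeneous N) (hsymm : p.IsSymmetric) (hc : ∀ m, 0 ≤ coeff m p)
    (l : ι → ℝ) (hl : ∀ i, 0 < l i) :
    eval (fun _ => 1) p * (∏ i, l i) ^ ((N : ℝ) / Fintype.card ι) ≤ eval l p := by
  classical
  set x : ι → ℝ := fun i => Real.log (l i) with hx
  set n : ℝ := (Fintype.card ι : ℝ) with hn
  have hn0 : n ≠ 0 := by simp [hn]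
  set μ : ℝ := (∑ i, x i) * (N / n) with hμ
  have hprod : (∏ i, l i) ^ ((N : ℝ) / n) = Real.exp μ := by
    rw [Real.rpow_def_of_pos (Finset.prod_pos fun i _ => hl i),
      Real.log_prod (fun i _ => (hl i).ne')]
  set g : ι → ℝ := fun i => ∑ d ∈ p.support, coeff d p * d i with hg
  have hone : eval (fun _ => 1) p = ∑ d ∈ p.support, coeff d p := by
    simp [eval_eq']
  have hgeq : ∀ i j, g i = g j := by
    intro i j
    have h := pderiv_rename (Equiv.swap i j).injective i p
    rw [hsymm, Equiv.swap_apply_left] at h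
    have h2 := congrArg (eval fun _ => (1 : ℝ)) h
    rw [eval_rename] at h2
    simp only [hg, ← pderiv_eval_one]
    rw [h2]
    rfl
  have hgsum : ∑ i, g i = N * eval (fun _ => 1) p := by
    rw [hone, Finset.mul_sum]
    simp only [hg]
    rw [Finset.sum_comm]
    refine Finset.sum_congr rfl fun d hd => ?_
    rw [← Finset.mul_sum, ← sum_exponents hp hd]
    push_cast
    ring
  have hgi : ∀ i, g i = N / n * eval (fun _ => 1) p := by
    intro i
    rw [Finset.sum_congr rfl fun j _ => hgeq j i] at hgsum
    simp only [Finset.sum_const, Finset.card_univ, nsmul_eq_mul] at hgsum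
    rw [div_mul_eq_mul_div, eq_div_iff hn0, ← hgsum]
    ring
  have hmono : ∀ d : ι →₀ ℕ, ∏ i, l i ^ d i = Real.exp (∑ i, d i * x i) := by
    intro d
    rw [Real.exp_sum]
    refine Finset.prod_congr rfl fun i _ => ?_
    rw [Real.exp_nat_mul, hx, Real.exp_log (hl i)]
  have hlin : ∑ d ∈ p.support, coeff d p * (∑ i, d i * x i) = μ * eval (fun _ => 1) p := by
    have : ∑ d ∈ p.support, coeff d p * (∑ i, d i * x i) = ∑ i, g i * x i := by
      simp only [hg, Finset.sum_mul, Finset.mul_sum]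
      rw [Finset.sum_comm]
      simp only [mul_assoc]
    rw [this]
    simp only [hgi, ← Finset.mul_sum]
    rw [hμ]; ring
  rw [hprod, eval_eq' l p]
  calc eval (fun _ => 1) p * Real.exp μ
      = ∑ d ∈ p.support, coeff d p * (Real.exp μ * ((∑ i, d i * x i) - μ + 1)) := by
        have : ∀ d, coeff d p * (Real.exp μ * ((∑ i, d i * x i) - μ + 1)) =
            Real.exp μ * (coeff d p * (∑ i, d i * x i)) +
              Real.exp μ * (1 - μ) * coeff d p := fun d => by ring
        simp only [this]
        rw [Finset.sum_add_distrib, ← Finset.mul_sum, ← Finset.mul_sum, hlin, ← hone]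
        ring
    _ ≤ ∑ d ∈ p.support, coeff d p * ∏ i, l i ^ d i := by
        refine Finset.sum_le_sum fun d _ => mul_le_mul_of_nonneg_left ?_ (hc d)
        rw [hmono]
        calc _ ≤ Real.exp μ * Real.exp ((∑ i, d i * x i) - μ) := by
              gcongr; exact Real.add_one_le_exp _
          _ = _ := by rw [← Real.exp_add]; congr 1; ring

end GardingDirichlet

/-! ### The majorization for invariant polynomials -/

open MvPolynomial GardingDirichlet

/-- Theorem 4.5 (real case): for every O(n)-invariant Gårding–Dirichlet polynomial
operator `F` of degree `N`, one has `F(I) > 0`, and for every real symmetric positive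
semidefinite matrix `A`, `F(A)^{1/N} ≥ F(I)^{1/N} · (det A)^{1/n}`. -/
theorem invariant_GD_determinant_majorization
    (n N : ℕ) (hn : 1 ≤ n) (hN : 1 ≤ N)
    (F : Matrix (Fin n) (Fin n) ℝ → ℝ)
    (hF : ∃ Φ : MvPolynomial (Fin n × Fin n) ℝ, Φ.IsHomogeneous N ∧
      ∀ A : Matrix (Fin n) (Fin n) ℝ, F A = MvPolynomial.eval (fun ij => A ij.1 ij.2) Φ)
    (hinv : ∀ g : Matrix (Fin n) (Fin n) ℝ, g * g.transpose = 1 →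
      ∀ A : Matrix (Fin n) (Fin n) ℝ, A.IsSymm → F (g * A * g.transpose) = F A)
    (hhyp : ∀ A : Matrix (Fin n) (Fin n) ℝ, A.IsSymm →
      ∃ q : Polynomial ℝ, q.natDegree = N ∧ q.roots.card = N ∧
        ∀ t : ℝ, q.eval t = F (t • (1 : Matrix (Fin n) (Fin n) ℝ) + A))
    (hpos : ∀ A : Matrix (Fin n) (Fin n) ℝ, A.PosDef → 0 < F A) :
    0 < F 1 ∧
    ∀ A : Matrix (Fin n) (Fin n) ℝ, A.PosSemidef →
      (F 1) ^ ((1 : ℝ) / N) * A.det ^ ((1 : ℝ) / n) ≤ (F A) ^ ((1 : ℝ) / N) := by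
  obtain ⟨Φ, hΦ, hFΦ⟩ := hF
  have hF1 : 0 < F 1 := hpos 1 Matrix.PosDef.one
  refine ⟨hF1, ?_⟩
  have : Nonempty (Fin n) := ⟨⟨0, hn⟩⟩
  -- the restriction of `F` to diagonal matrices
  set p : MvPolynomial (Fin n) ℝ :=
    aeval (fun ij : Fin n × Fin n => if ij.1 = ij.2 then X ij.1 else 0) Φ with hpdef
  have hp : p.IsHomogeneous N := by
    have := hΦ.aeval (R := ℝ) (S := ℝ) (n := 1)
      (fun ij : Fin n × Fin n => if ij.1 = ij.2 then (X ij.1 : MvPolynomial (Fin n) ℝ) else 0)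
      (fun ij => by
        split_ifs
        · exact isHomogeneous_X _ _
        · exact isHomogeneous_zero _ _ _)
    rwa [one_mul] at this
  have hpF : ∀ l : Fin n → ℝ, eval l p = F (Matrix.diagonal l) := by
    intro l
    rw [hFΦ, hpdef]
    have h : (eval l) ((aeval fun ij : Fin n × Fin n =>
        if ij.1 = ij.2 then (X ij.1 : MvPolynomial (Fin n) ℝ) else 0) Φ) =
        eval (fun ij : Fin n × Fin n => eval l (if ij.1 = ij.2 then X ij.1 else 0)) Φ := by
      exact eval_aeval_comp _ l Φ
    rw [h]
    congr 2
    funext ij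
    rw [Matrix.diagonal_apply]
    split_ifs <;> simp
  have hp1 : eval (fun _ => 1) p = F 1 := by rw [hpF]; simp
  have hposO : PosOrthant p := fun a ha => by
    rw [hpF]; exact hpos _ (Matrix.posDef_diagonal_iff.mpr ha)
  have hreal : ∀ (x : Fin n → ℝ) (t : ℂ),
      aeval (fun i => (x i : ℂ) + t) p = 0 → t.im = 0 := by
    intro x t h0
    obtain ⟨q, hqd, hqr, hq⟩ := hhyp (Matrix.diagonal x) (Matrix.isSymm_diagonal x)
    -- `q` and the restriction of `p` agree at all real points, hence as complex polynomials
    have hq' : q.map (algebraMap ℝ ℂ) = line p (fun i => (x i : ℂ)) (fun _ => 1) := by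
      refine Polynomial.eq_of_infinite_eval_eq _ _ ?_
      refine (Set.infinite_range_of_injective Complex.ofReal_injective).mono ?_
      rintro _ ⟨s, rfl⟩
      have e : s • (1 : Matrix (Fin n) (Fin n) ℝ) + Matrix.diagonal x =
          Matrix.diagonal fun i => x i + s := by
        ext i j
        by_cases hij : i = j <;> simp [hij, add_comm]
      change Polynomial.eval (s : ℂ) _ = Polynomial.eval (s : ℂ) _
      have h1 : Polynomial.eval (s : ℂ) (q.map (algebraMap ℝ ℂ)) = ((q.eval s : ℝ) : ℂ) :=
        Polynomial.eval_map_apply (algebraMap ℝ ℂ) s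
      rw [h1, hq, e, ← hpF, line_eval, ← aeval_ofReal]
      simp
    have hsp : q.Splits := Polynomial.splits_iff_card_roots.mpr (by rw [hqd, hqr])
    have hq0 : q ≠ 0 := by
      rintro rfl
      simp at hqd
      omega
    have hqt : t ∈ (q.map (algebraMap ℝ ℂ)).roots := by
      rw [Polynomial.mem_roots (Polynomial.map_ne_zero hq0), hq', Polynomial.IsRoot, line_eval]
      simpa using h0
    rw [hsp.roots_map] at hqt
    obtain ⟨r, -, rfl⟩ := Multiset.mem_map.mp hqt
    simp
  have hsymm : p.IsSymmetric := by
    intro σ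
    refine MvPolynomial.funext fun l => ?_
    rw [eval_rename, hpF, hpF]
    set g : Matrix (Fin n) (Fin n) ℝ := σ.toPEquiv.toMatrix with hg
    have hgA : ∀ A : Matrix (Fin n) (Fin n) ℝ, g * A * g.transpose = A.submatrix σ σ := by
      intro A
      ext i j
      simp [hg, PEquiv.toMatrix_toPEquiv_mul, ← PEquiv.toMatrix_symm,
        PEquiv.mul_toMatrix_toPEquiv, ← Equiv.toPEquiv_symm]
    have := hinv g (by have := hgA 1; simpa using this) (Matrix.diagonal l)
      (Matrix.isSymm_diagonal l)
    rw [← this, hgA, Matrix.submatrix_diagonal_equiv]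
  have hc := coeff_nonneg N p hp (stable_of_hyperbolic hp hreal hposO) hposO
  intro A hA
  set l := hA.isHermitian.eigenvalues with hl
  have hl0 : ∀ i, 0 ≤ l i := hA.eigenvalues_nonneg
  have hdet : A.det = ∏ i, l i := by simpa using hA.isHermitian.det_eq_prod_eigenvalues
  have hFA : F A = eval l p := by
    rw [hpF]
    have h := hA.isHermitian.spectral_theorem
    set U := hA.isHermitian.eigenvectorUnitary
    have hU : (U : Matrix (Fin n) (Fin n) ℝ) * (U : Matrix (Fin n) (Fin n) ℝ).transpose = 1 := by
      have := Unitary.coe_mul_star_self U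
      simpa [Matrix.star_eq_conjTranspose] using this
    rw [← hinv U hU _ (Matrix.isSymm_diagonal l)]
    conv_lhs => rw [h]
    simp [Unitary.conjStarAlgAut_apply, Matrix.star_eq_conjTranspose, hl]
  have hnR : (n : ℝ) ≠ 0 := by positivity
  have hNR : (N : ℝ) ≠ 0 := by positivity
  have hFA0 : 0 ≤ F A := by
    rw [hFA, eval_eq']
    exact Finset.sum_nonneg fun d _ =>
      mul_nonneg (hc d) (Finset.prod_nonneg fun i _ => pow_nonneg (hl0 i) _)
  by_cases hz : ∀ i, 0 < l i
  · have h := symmetric_majorization hp hsymm hc l hz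
    rw [hp1, ← hdet, ← hFA, Fintype.card_fin] at h
    have hdet0 : 0 ≤ A.det := by rw [hdet]; exact Finset.prod_nonneg fun i _ => hl0 i
    have h2 := Real.rpow_le_rpow (by positivity) h (show (0 : ℝ) ≤ 1 / N by positivity)
    rw [Real.mul_rpow hF1.le (by positivity), ← Real.rpow_mul hdet0] at h2
    convert h2 using 3
    field_simp
  -- for singular `A` the left side is `0 ^ (1 / n) = 0`; nonnegativity of `F A` is what is needed
  · push Not at hz
    obtain ⟨i, hi⟩ := hz
    have : A.det = 0 := by
      rw [hdet]; exact Finset.prod_eq_zero (Finset.mem_univ i) (le_antisymm hi (hl0 i))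
    rw [this, Real.zero_rpow (by positivity), mul_zero]
    positivity
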